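/- arXiv:1306.2868 — 2 statements merged into one kernel-verified Lean document; each statement's English description precedes it below -/
import Mathlib

section
/- Let Ω be a measurable space, μ a probability measure on Ω, 𝒢 a countable index set, and for each x ∈ 𝒢 let κ_x be a Markov kernel from Ω to Ω such that μ is invariant under κ_x (μ.bind κ_x = μ). Define Ψ_x f(η) = ∫ f(ξ) κ_x(η)(dξ), D_x f = Ψ_x f − f, the Dirichlet form ℰ(f,f) = (1/2) Σ_{x∈𝒢} ∫ (∫ (f(ξ) − f(η))² κ_x(η)(dξ)) μ(dη), and the Orlicz norm ‖g‖_Φ = inf{a > 0 : ∫ Φ(g/a) dμ ≤ 1} with Φ(x) = x²/log(e+|x|). There is a universal constant c₂ > 0 (one may take c₂ = (13/4)·700⁴) with the following property: if C ≥ 1 is such that Var_μ(g) ≤ C Σ_{x∈𝒢} ‖D_x g‖_Φ² for every bounded measurable g : Ω → ℝ, then for every bounded measurable f : Ω → ℝ one has Ent_μ(f²) ≤ c₂ · C · ℰ(f,f), where Ent_μ(f²) = ∫ f² log(f² / ∫f²dμ) dμ and Var_μ(f) = ∫ (f − ∫f dμ)² dμ. -/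
open MeasureTheory ProbabilityTheory Real
open scoped ENNReal

/-- The function `Φ(x) = x² / log(e + |x|)`. -/
noncomputable def Phi (x : ℝ) : ℝ := x ^ 2 / Real.log (Real.exp 1 + |x|)

/-- The Orlicz (Luxemburg) norm `‖f‖_{φ;μ} = inf {a > 0 : ∫ φ(f/a) dμ ≤ 1}`,
valued in `[0,∞]` (it is `∞` when no such `a` exists). -/
noncomputable def orliczNorm {Ω : Type*} [MeasurableSpace Ω] (μ : Measure Ω)
    (φ : ℝ → ℝ) (f : Ω → ℝ) : ℝ≥0∞ :=
  sInf {a : ℝ≥0∞ | ∃ r : ℝ, 0 < r ∧ a = ENNReal.ofReal r ∧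
    ∫⁻ x, ENNReal.ofReal (φ (f x / r)) ∂μ ≤ 1}

lemma int_bdd {Ω : Type*} [MeasurableSpace Ω] (ν : Measure Ω) [IsFiniteMeasure ν] {g : Ω → ℝ}
    (hg : Measurable g) {M : ℝ} (hM : ∀ η, |g η| ≤ M) : Integrable g ν :=
  Integrable.of_bound hg.aestronglyMeasurable M (Filter.Eventually.of_forall hM)

lemma int_sq {Ω : Type*} [MeasurableSpace Ω] (ν : Measure Ω) [IsFiniteMeasure ν] {g : Ω → ℝ}
    (hg : Measurable g) {M : ℝ} (hM : ∀ η, |g η| ≤ M) : Integrable (fun η => g η ^ 2) ν := by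
  refine int_bdd ν (hg.pow_const 2) (M := M ^ 2) fun η => ?_
  rw [abs_pow]
  exact pow_le_pow_left₀ (abs_nonneg _) (hM η) 2

lemma expand_sq {Ω : Type*} [MeasurableSpace Ω] (ν : Measure Ω) [IsProbabilityMeasure ν]
    {g : Ω → ℝ} (hg : Measurable g) {M : ℝ} (hM : ∀ η, |g η| ≤ M) (a : ℝ) :
    ∫ ξ, (g ξ - a) ^ 2 ∂ν = (∫ ξ, g ξ ^ 2 ∂ν) - 2 * a * (∫ ξ, g ξ ∂ν) + a ^ 2 := by
  have h1 := int_bdd ν hg hM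
  have h2 := int_sq ν hg hM
  have : ∀ ξ, (g ξ - a) ^ 2 = (g ξ ^ 2 - 2 * a * g ξ) + a ^ 2 := fun ξ => by ring
  simp_rw [this]
  have h3 : Integrable (fun ξ => g ξ ^ 2 - 2 * a * g ξ) ν := h2.sub (h1.const_mul _)
  rw [integral_add h3 (integrable_const _),
    integral_sub h2 (h1.const_mul _), integral_const_mul]
  simp

lemma jensen_sq {Ω : Type*} [MeasurableSpace Ω] (ν : Measure Ω) [IsProbabilityMeasure ν]
    {g : Ω → ℝ} (hg : Measurable g) {M : ℝ} (hM : ∀ η, |g η| ≤ M) (a : ℝ) :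
    ((∫ ξ, g ξ ∂ν) - a) ^ 2 ≤ ∫ ξ, (g ξ - a) ^ 2 ∂ν := by
  have h := expand_sq ν hg hM (∫ ξ, g ξ ∂ν)
  have h0 : 0 ≤ ∫ ξ, (g ξ - (∫ ξ, g ξ ∂ν)) ^ 2 ∂ν := integral_nonneg fun _ => sq_nonneg _
  rw [expand_sq ν hg hM a]
  nlinarith

lemma cs_supp {Ω : Type*} [MeasurableSpace Ω] (ν : Measure Ω) [IsProbabilityMeasure ν]
    {g : Ω → ℝ} (hg : Measurable g) {M : ℝ} (hM : ∀ η, |g η| ≤ M) {A : Set Ω}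
    (hA : MeasurableSet A) (hgA : ∀ η, η ∉ A → g η = 0) (l : ℝ) :
    2 * l * (∫ ξ, g ξ ∂ν) ≤ (∫ ξ, g ξ ^ 2 ∂ν) + l ^ 2 * ν.real A := by
  have h1 := int_bdd ν hg hM
  have h2 := int_sq ν hg hM
  have h3 : Integrable (A.indicator (fun _ => l ^ 2)) ν := (integrable_const _).indicator hA
  have h4 : ∫ ξ, A.indicator (fun _ => l ^ 2) ξ ∂ν = l ^ 2 * ν.real A := by
    rw [integral_indicator_const _ hA, smul_eq_mul, mul_comm]
  rw [← h4, ← integral_add h2 h3, ← integral_const_mul]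
  refine integral_mono (h1.const_mul _) (h2.add h3) fun ξ => ?_
  by_cases hξ : ξ ∈ A
  · simp only [Set.indicator_of_mem hξ]; nlinarith [sq_nonneg (g ξ - l)]
  · simp [Set.indicator_of_notMem hξ, hgA ξ hξ]

lemma Phi_le_sq (y : ℝ) : Phi y ≤ y ^ 2 := by
  unfold Phi
  apply div_le_self (sq_nonneg _)
  rw [Real.le_log_iff_exp_le (by positivity)]
  linarith [abs_nonneg y]

lemma Phi_le_big (k : ℕ) (hk : 1 ≤ k) (y : ℝ) (hy : 2 ^ k / 8 ≤ y ^ 2) :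
    Phi y ≤ 10 / k * y ^ 2 := by
  have hk' : (1 : ℝ) ≤ k := by exact_mod_cast hk
  have he : (2.7 : ℝ) < Real.exp 1 := by linarith [Real.exp_one_gt_d9]
  have hlog : (k : ℝ) / 10 ≤ Real.log (Real.exp 1 + |y|) := by
    set z := Real.exp 1 + |y| with hz
    have hy0 := abs_nonneg y
    have hz2 : 2 ≤ z := by linarith
    have h1 : (2 : ℝ) ^ k ≤ z ^ 5 := by
      have a1 : (8 : ℝ) ≤ z ^ 3 := by
        calc (8 : ℝ) = 2 ^ 3 := by norm_num
          _ ≤ z ^ 3 := by gcongr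
      have a2 : y ^ 2 ≤ z ^ 2 := by
        rw [← sq_abs y]; apply pow_le_pow_left₀ hy0; linarith
      calc (2 : ℝ) ^ k ≤ 8 * y ^ 2 := by linarith
        _ ≤ z ^ 3 * z ^ 2 := by gcongr
        _ = z ^ 5 := by ring
    have h2 := Real.log_le_log (by positivity) h1
    rw [Real.log_pow, Real.log_pow] at h2
    have := Real.log_two_gt_d9
    push_cast at h2
    nlinarith
  unfold Phi
  rw [div_le_iff₀ (by linarith [show (0 : ℝ) < k / 10 by positivity])]
  calc y ^ 2 = 10 / k * y ^ 2 * (k / 10) := by field_simp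
    _ ≤ _ := by gcongr

noncomputable def En {Ω : Type*} [MeasurableSpace Ω] (μ : Measure Ω) (κ : Kernel Ω Ω)
    (g : Ω → ℝ) : ℝ≥0∞ := ∫⁻ η, ENNReal.ofReal (∫ ξ, (g ξ - g η) ^ 2 ∂(κ η)) ∂μ

lemma orlicz_sq_le {Ω : Type*} [MeasurableSpace Ω] (μ : Measure Ω) (h : Ω → ℝ) (E : ℝ≥0∞)
    (H : ∀ r : ℝ, 0 < r → E ≤ ENNReal.ofReal (r ^ 2) →
      ∫⁻ x, ENNReal.ofReal (Phi (h x / r)) ∂μ ≤ 1) :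
    orliczNorm μ Phi h ^ 2 ≤ E := by
  refine le_of_forall_gt_imp_ge_of_dense fun b hb => ?_
  by_cases hbt : b = ⊤
  · simp [hbt]
  have hb0 : 0 < b.toReal := ENNReal.toReal_pos (by rintro rfl; simp at hb) hbt
  have hr : 0 < √b.toReal := Real.sqrt_pos.2 hb0
  have hbr : ENNReal.ofReal (√b.toReal ^ 2) = b := by
    rw [Real.sq_sqrt hb0.le, ENNReal.ofReal_toReal hbt]
  have : orliczNorm μ Phi h ≤ ENNReal.ofReal (√b.toReal) :=
    sInf_le ⟨_, hr, rfl, H _ hr (by rw [hbr]; exact hb.le)⟩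
  calc _ ≤ ENNReal.ofReal (√b.toReal) ^ 2 := by gcongr
    _ = b := by rw [← ENNReal.ofReal_pow hr.le, hbr]

lemma orlicz_le_En {Ω : Type*} [MeasurableSpace Ω] (μ : Measure Ω)
    (κ : Kernel Ω Ω) [IsMarkovKernel κ] {g : Ω → ℝ} (hg : Measurable g) {M : ℝ}
    (hM : ∀ η, |g η| ≤ M) :
    orliczNorm μ Phi (fun η => (∫ ξ, g ξ ∂(κ η)) - g η) ^ 2 ≤ En μ κ g := by
  apply orlicz_sq_le
  intro r hr hE
  have hp : ∀ η, ENNReal.ofReal (Phi (((∫ ξ, g ξ ∂(κ η)) - g η) / r)) ≤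
      ENNReal.ofReal ((r ^ 2)⁻¹) * ENNReal.ofReal (∫ ξ, (g ξ - g η) ^ 2 ∂(κ η)) := by
    intro η
    rw [← ENNReal.ofReal_mul (by positivity)]
    apply ENNReal.ofReal_le_ofReal
    refine (Phi_le_sq _).trans ?_
    rw [div_pow, div_eq_inv_mul]
    have := jensen_sq (κ η) hg hM (g η)
    gcongr
  calc _ ≤ ∫⁻ η, ENNReal.ofReal ((r ^ 2)⁻¹) *
        ENNReal.ofReal (∫ ξ, (g ξ - g η) ^ 2 ∂(κ η)) ∂μ := lintegral_mono hp
    _ = ENNReal.ofReal ((r ^ 2)⁻¹) * En μ κ g := lintegral_const_mul' _ _ ENNReal.ofReal_ne_top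
    _ ≤ ENNReal.ofReal ((r ^ 2)⁻¹) * ENNReal.ofReal (r ^ 2) := by gcongr
    _ = 1 := by
      rw [← ENNReal.ofReal_mul (by positivity), inv_mul_cancel₀ (by positivity), ENNReal.ofReal_one]

lemma orlicz_le_En_k {Ω : Type*} [MeasurableSpace Ω] (μ : Measure Ω) [IsProbabilityMeasure μ]
    (κ : Kernel Ω Ω) [IsMarkovKernel κ] (hinv : μ.bind (fun η => κ η) = μ)
    {g : Ω → ℝ} (hg : Measurable g) {M : ℝ}
    (hM : ∀ η, |g η| ≤ M) {A : Set Ω} (hA : MeasurableSet A) (hgA : ∀ η, η ∉ A → g η = 0)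
    (k : ℕ) (hk : 1 ≤ k) (hmA : μ A ≤ ENNReal.ofReal ((4 ^ k)⁻¹)) :
    orliczNorm μ Phi (fun η => (∫ ξ, g ξ ∂(κ η)) - g η) ^ 2
      ≤ ENNReal.ofReal (16 / k) * En μ κ g := by
  have hk' : (1 : ℝ) ≤ k := by exact_mod_cast hk
  have hk2 : (k : ℝ) ≤ 2 ^ k := by exact_mod_cast Nat.lt_two_pow_self.le
  have h2k : (2 : ℝ) ≤ 2 ^ k := by
    calc (2 : ℝ) = 2 ^ 1 := by norm_num
      _ ≤ 2 ^ k := by gcongr; norm_num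
  have h4k : (4 : ℝ) ^ k = 2 ^ k * 2 ^ k := by rw [← mul_pow]; norm_num
  apply orlicz_sq_le
  intro r hr hE
  have hp : ∀ η, ENNReal.ofReal (Phi (((∫ ξ, g ξ ∂(κ η)) - g η) / r)) ≤
      ENNReal.ofReal (11 / (k * r ^ 2)) * ENNReal.ofReal (∫ ξ, (g ξ - g η) ^ 2 ∂(κ η)) +
        ENNReal.ofReal (2 ^ k / 8) *
          (A.indicator (fun _ => 1) η + ENNReal.ofReal (2 ^ k) * κ η A) := by
    intro η
    have hj := jensen_sq (κ η) hg hM (g η)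
    set e := ∫ ξ, (g ξ - g η) ^ 2 ∂(κ η) with he
    set h := (∫ ξ, g ξ ∂(κ η)) - g η with hh
    have he0 : 0 ≤ e := integral_nonneg fun _ => sq_nonneg _
    have hyr : (h / r) ^ 2 ≤ e / r ^ 2 := by rw [div_pow]; gcongr
    -- first alternative
    by_cases hbig : 2 ^ k / 8 ≤ (h / r) ^ 2
    · refine le_trans ?_ le_self_add
      rw [← ENNReal.ofReal_mul (by positivity)]
      apply ENNReal.ofReal_le_ofReal
      calc _ ≤ 10 / k * (h / r) ^ 2 := Phi_le_big k hk _ hbig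
        _ ≤ 10 / k * (e / r ^ 2) := by gcongr
        _ ≤ 11 / k * (e / r ^ 2) := by gcongr; norm_num
        _ = _ := by field_simp
    push Not at hbig
    have hsmall : ENNReal.ofReal (Phi (h / r)) ≤ ENNReal.ofReal (2 ^ k / 8) :=
      ENNReal.ofReal_le_ofReal ((Phi_le_sq _).trans hbig.le)
    by_cases hηA : η ∈ A
    · refine le_trans ?_ le_add_self
      rw [Set.indicator_of_mem hηA]
      calc _ ≤ ENNReal.ofReal (2 ^ k / 8) * 1 := by rw [mul_one]; exact hsmall
        _ ≤ _ := by gcongr; exact le_self_add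
    by_cases hpA : (κ η).real A ≤ (2 ^ k)⁻¹
    · refine le_trans ?_ le_self_add
      rw [← ENNReal.ofReal_mul (by positivity)]
      apply ENNReal.ofReal_le_ofReal
      have hg0 := hgA η hηA
      have hc := cs_supp (κ η) hg hM hA hgA (h * 2 ^ k)
      have e1 : e = ∫ ξ, g ξ ^ 2 ∂(κ η) := by rw [he, hg0]; simp
      have e2 : h = ∫ ξ, g ξ ∂(κ η) := by rw [hh, hg0]; simp
      rw [← e1, ← e2] at hc
      have hb : (h * 2 ^ k) ^ 2 * (κ η).real A ≤ h ^ 2 * 2 ^ k := by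
        calc (h * 2 ^ k) ^ 2 * (κ η).real A ≤ (h * 2 ^ k) ^ 2 * (2 ^ k)⁻¹ := by gcongr
          _ = h ^ 2 * 2 ^ k := by field_simp
      have hke : h ^ 2 * k ≤ e := by
        have : h ^ 2 * k ≤ h ^ 2 * 2 ^ k := by gcongr
        nlinarith
      calc _ ≤ (h / r) ^ 2 := Phi_le_sq _
        _ = h ^ 2 * k / (k * r ^ 2) := by field_simp
        _ ≤ e / (k * r ^ 2) := by gcongr
        _ ≤ 11 * e / (k * r ^ 2) := by gcongr; linarith
        _ = _ := by ring
    · push Not at hpA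
      refine le_trans ?_ le_add_self
      calc _ ≤ ENNReal.ofReal (2 ^ k / 8) * 1 := by rw [mul_one]; exact hsmall
        _ ≤ _ := by
          gcongr
          refine le_trans ?_ le_add_self
          rw [← ENNReal.ofReal_toReal (measure_ne_top (κ η) A),
            ← ENNReal.ofReal_mul (by positivity), ENNReal.one_le_ofReal]
          change 1 ≤ 2 ^ k * (κ η).real A
          rw [inv_lt_iff_one_lt_mul₀ (by positivity)] at hpA
          linarith
  have hmk : Measurable fun η => κ η A := Kernel.measurable_coe κ hA
  have hind : Measurable (A.indicator (fun _ => (1 : ℝ≥0∞))) := measurable_const.indicator hA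
  have hkA : ∫⁻ η, κ η A ∂μ = μ A := by
    conv_rhs => rw [← hinv]
    rw [Measure.bind_apply hA κ.measurable.aemeasurable]
  have hI : ∫⁻ η, ENNReal.ofReal (2 ^ k / 8) *
          (A.indicator (fun _ => 1) η + ENNReal.ofReal (2 ^ k) * κ η A) ∂μ
        ≤ ENNReal.ofReal (1 / 4) := by
    rw [lintegral_const_mul' _ _ ENNReal.ofReal_ne_top, lintegral_add_left hind,
      lintegral_const_mul' _ _ ENNReal.ofReal_ne_top, hkA, show ∫⁻ η, A.indicator (fun _ => (1 : ℝ≥0∞)) η ∂μ = μ A from lintegral_indicator_one hA]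
    calc _ ≤ ENNReal.ofReal (2 ^ k / 8) * (ENNReal.ofReal ((4 ^ k)⁻¹) +
          ENNReal.ofReal (2 ^ k) * ENNReal.ofReal ((4 ^ k)⁻¹)) := by gcongr
      _ = ENNReal.ofReal (2 ^ k / 8 * ((4 ^ k)⁻¹ + 2 ^ k * (4 ^ k)⁻¹)) := by
        rw [ENNReal.ofReal_mul (by positivity), ENNReal.ofReal_add (by positivity) (by positivity),
          ENNReal.ofReal_mul (by positivity)]
      _ ≤ _ := by
        apply ENNReal.ofReal_le_ofReal
        rw [h4k]
        have : (2 : ℝ) ^ k / 8 * ((2 ^ k * 2 ^ k)⁻¹ + 2 ^ k * (2 ^ k * 2 ^ k)⁻¹)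
          = ((2 ^ k)⁻¹ + 1) / 8 := by field_simp
        rw [this]
        have : ((2 : ℝ) ^ k)⁻¹ ≤ 1 := inv_le_one_of_one_le₀ (by linarith)
        linarith
  have hEE : ENNReal.ofReal (11 / (k * r ^ 2)) * En μ κ g ≤ ENNReal.ofReal (11 / 16) := by
    have : ENNReal.ofReal (11 / (k * r ^ 2)) =
        ENNReal.ofReal (11 / 16 / r ^ 2) * ENNReal.ofReal (16 / k) := by
      rw [← ENNReal.ofReal_mul (by positivity)]; congr 1; field_simp
    rw [this, mul_assoc]
    calc _ ≤ ENNReal.ofReal (11 / 16 / r ^ 2) * ENNReal.ofReal (r ^ 2) := by gcongr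
      _ = _ := by rw [← ENNReal.ofReal_mul (by positivity)]; congr 1; field_simp
  calc _ ≤ _ := lintegral_mono hp
    _ = ENNReal.ofReal (11 / (k * r ^ 2)) * En μ κ g + ∫⁻ η, ENNReal.ofReal (2 ^ k / 8) *
          (A.indicator (fun _ => 1) η + ENNReal.ofReal (2 ^ k) * κ η A) ∂μ := by
      have hmm : Measurable (fun η => ENNReal.ofReal (2 ^ k / 8) *
          (A.indicator (fun _ => (1 : ℝ≥0∞)) η + ENNReal.ofReal (2 ^ k) * κ η A)) :=
        (hind.add (hmk.const_mul _)).const_mul _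
      rw [lintegral_add_right _ hmm,
        lintegral_const_mul' _ _ ENNReal.ofReal_ne_top]
      rfl
    _ ≤ ENNReal.ofReal (11 / 16) + ENNReal.ofReal (1 / 4) := add_le_add hEE hI
    _ ≤ 1 := by
      rw [← ENNReal.ofReal_add (by norm_num) (by norm_num)]
      exact ENNReal.ofReal_le_one.2 (by norm_num)

/-- truncation -/
noncomputable def tr (k : ℕ) (u : ℝ) : ℝ := min (max (u - 2 ^ k) 0) (2 ^ k)

lemma tr_mono (k : ℕ) : Monotone (tr k) := by
  intro a b h
  unfold tr
  gcongr

lemma tr_nonneg (k : ℕ) (u : ℝ) : 0 ≤ tr k u := le_min (le_max_right _ _) (by positivity)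

lemma tr_le (k : ℕ) (u : ℝ) : tr k u ≤ 2 ^ k := min_le_right _ _

lemma tr_meas (k : ℕ) : Measurable (tr k) := by unfold tr; fun_prop

lemma tr_sum (N : ℕ) (u : ℝ) :
    ∑ k ∈ Finset.range N, tr (k + 1) u = min (max (u - 2) 0) (2 ^ (N + 1) - 2) := by
  induction N with
  | zero => simp
  | succ n ih =>
    rw [Finset.sum_range_succ, ih, tr]
    have h : (2 : ℝ) ^ (n + 1 + 1) = 2 * 2 ^ (n + 1) := by ring
    have h1 : (2 : ℝ) ≤ 2 ^ (n + 1) := by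
      calc (2 : ℝ) = 2 ^ 1 := by norm_num
        _ ≤ 2 ^ (n + 1) := by gcongr <;> first | norm_num | omega
    rw [h]
    generalize (2 : ℝ) ^ (n + 1) = t at *
    rcases max_cases (u - 2) 0 with ⟨a, a'⟩ | ⟨a, a'⟩ <;>
    rcases max_cases (u - t) 0 with ⟨b, b'⟩ | ⟨b, b'⟩ <;> rw [a, b] <;>
    simp only [min_def] <;> split_ifs <;> linarith

lemma tr_sum_sq (N : ℕ) (u v : ℝ) :
    ∑ k ∈ Finset.range N, (tr (k + 1) u - tr (k + 1) v) ^ 2 ≤ (u - v) ^ 2 := by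
  wlog h : v ≤ u generalizing u v
  · have := this v u (by linarith)
    calc _ = ∑ k ∈ Finset.range N, (tr (k + 1) v - tr (k + 1) u) ^ 2 :=
          Finset.sum_congr rfl fun _ _ => by ring
      _ ≤ _ := this
      _ = _ := by ring
  calc _ ≤ (∑ k ∈ Finset.range N, (tr (k + 1) u - tr (k + 1) v)) ^ 2 :=
        Finset.sum_sq_le_sq_sum_of_nonneg fun k _ => sub_nonneg.2 (tr_mono _ h)
    _ ≤ (u - v) ^ 2 := by
      apply pow_le_pow_left₀ (Finset.sum_nonneg fun k _ => sub_nonneg.2 (tr_mono _ h))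
      rw [Finset.sum_sub_distrib, tr_sum, tr_sum]
      have h1 : (2 : ℝ) ≤ 2 ^ (N + 1) := by
        calc (2 : ℝ) = 2 ^ 1 := by norm_num
          _ ≤ 2 ^ (N + 1) := by gcongr <;> first | norm_num | omega
      generalize (2 : ℝ) ^ (N + 1) = t at *
      rcases max_cases (u - 2) 0 with ⟨a, a'⟩ | ⟨a, a'⟩ <;>
      rcases max_cases (v - 2) 0 with ⟨b, b'⟩ | ⟨b, b'⟩ <;> rw [a, b] <;>
      simp only [min_def] <;> split_ifs <;> linarith

lemma ptwise (N : ℕ) (u : ℝ) (hu : 0 ≤ u) (huN : u ≤ 2 ^ N) :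
    u ^ 2 * Real.log (u ^ 2) - u ^ 2 + 1 ≤ 9 * (u - 1) ^ 2 +
      96 * ∑ k ∈ Finset.range N, ((k + 1 : ℕ) : ℝ) * tr (k + 1) u ^ 2 := by
  have hS : ∀ k ∈ Finset.range N, 0 ≤ ((k + 1 : ℕ) : ℝ) * tr (k + 1) u ^ 2 :=
    fun k _ => by positivity
  by_cases h4 : u ≤ 4
  · have hS0 := Finset.sum_nonneg hS
    rcases hu.eq_or_lt with rfl | hpos
    · norm_num only [ne_eq, zero_pow, zero_mul]; linarith
    have hl : Real.log (u ^ 2) ≤ 2 * (u - 1) := by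
      rw [Real.log_pow]; push_cast
      linarith [Real.log_le_sub_one_of_pos hpos]
    have : u ^ 2 * Real.log (u ^ 2) ≤ u ^ 2 * (2 * (u - 1)) := by gcongr
    nlinarith [mul_nonneg (sub_nonneg.2 h4) (sq_nonneg (u - 1))]
  · push Not at h4
    obtain ⟨n, hn1, hn2⟩ := exists_nat_pow_near (by linarith : (1 : ℝ) ≤ u) (by norm_num : (1 : ℝ) < 2)
    have hn : 2 ≤ n := by
      by_contra hlt
      have : (2 : ℝ) ^ (n + 1) ≤ 2 ^ 2 := pow_le_pow_right₀ (by norm_num) (by omega)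
      linarith
    obtain ⟨j, rfl⟩ := Nat.exists_eq_add_of_le' hn
    have hjN : j < N := by
      have : (2 : ℝ) ^ (j + 2) ≤ 2 ^ N := hn1.trans huN
      have := (pow_le_pow_iff_right₀ (by norm_num : (1 : ℝ) < 2)).1 this
      omega
    have hs := Finset.single_le_sum hS (Finset.mem_range.2 hjN)
    have ht : tr (j + 1) u = 2 ^ (j + 1) := by
      unfold tr
      apply min_eq_right
      apply le_max_of_le_left
      have : (2 : ℝ) ^ (j + 2) = 2 * 2 ^ (j + 1) := by ring
      linarith
    rw [ht] at hs
    have hlog : Real.log (u ^ 2) ≤ 2 * (j + 3) := by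
      rw [Real.log_pow]
      have h1 := Real.log_le_log (by linarith) hn2.le
      rw [Real.log_pow] at h1
      have h2 := Real.log_two_lt_d9
      push_cast at h1 ⊢
      have : ((j : ℝ) + 2 + 1) * Real.log 2 ≤ ((j : ℝ) + 2 + 1) * 1 := by gcongr; linarith
      linarith
    have hu2 : u ^ 2 ≤ 16 * (2 ^ (j + 1)) ^ 2 := by
      calc u ^ 2 ≤ (2 ^ (j + 2 + 1)) ^ 2 := by gcongr
        _ = _ := by ring
    have : u ^ 2 * Real.log (u ^ 2) ≤ 96 * (((j + 1 : ℕ) : ℝ) * (2 ^ (j + 1)) ^ 2) := by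
      calc _ ≤ (16 * (2 ^ (j + 1)) ^ 2) * (2 * ((j : ℝ) + 3)) := by
            gcongr
            exact Real.log_nonneg (by nlinarith)
        _ ≤ (16 * (2 ^ (j + 1)) ^ 2) * (6 * ((j : ℝ) + 1)) := by
            exact mul_le_mul_of_nonneg_left (by linarith [(Nat.cast_nonneg j : (0 : ℝ) ≤ j)]) (by positivity)
        _ = _ := by push_cast; ring
    nlinarith [sq_nonneg (u - 1)]

lemma e_meas {Ω : Type*} [MeasurableSpace Ω] (κ : Kernel Ω Ω) [IsMarkovKernel κ]
    {g : Ω → ℝ} (hg : Measurable g) :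
    Measurable (fun η => ENNReal.ofReal (∫ ξ, (g ξ - g η) ^ 2 ∂(κ η))) := by
  apply Measurable.ennreal_ofReal
  have : Measurable (fun p : Ω × Ω => (g p.2 - g p.1) ^ 2) := by fun_prop
  exact (this.stronglyMeasurable.integral_kernel_prod_right' (κ := κ)).measurable

lemma En_sum {Ω : Type*} [MeasurableSpace Ω] (μ : Measure Ω) (κ : Kernel Ω Ω) [IsMarkovKernel κ]
    {F : Ω → ℝ} (hF : Measurable F) {M : ℝ} (hM : ∀ η, |F η| ≤ M) (N : ℕ) :
    ∑ k ∈ Finset.range N, En μ κ (fun η => tr (k + 1) (F η)) ≤ En μ κ F := by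
  unfold En
  have hm : ∀ k, Measurable (fun η => tr (k + 1) (F η)) := fun k => (tr_meas _).comp hF
  rw [← lintegral_finsetSum _ fun k _ => e_meas κ (hm k)]
  apply lintegral_mono
  intro η
  simp only
  rw [← ENNReal.ofReal_sum_of_nonneg fun k _ => integral_nonneg fun _ => sq_nonneg _]
  apply ENNReal.ofReal_le_ofReal
  have hi : ∀ k, Integrable (fun ξ => (tr (k + 1) (F ξ) - tr (k + 1) (F η)) ^ 2) (κ η) := by
    intro k
    refine int_sq _ ((hm k).sub_const _) (M := 2 ^ (k + 1)) fun ξ => ?_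
    rw [abs_le]
    constructor <;> linarith [tr_nonneg (k + 1) (F ξ), tr_nonneg (k + 1) (F η),
      tr_le (k + 1) (F ξ), tr_le (k + 1) (F η)]
  rw [← integral_finsetSum _ fun k _ => hi k]
  refine integral_mono (integrable_finsetSum _ fun k _ => hi k) ?_ fun ξ => tr_sum_sq N _ _
  refine int_sq _ (hF.sub_const _) (M := M + M) fun ξ => ?_
  exact (abs_sub _ _).trans (add_le_add (hM _) (hM _))

lemma core {Ω : Type*} [MeasurableSpace Ω] (μ : Measure Ω) [IsProbabilityMeasure μ]
    {G : Type*}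
    (κ : G → Kernel Ω Ω) [∀ x, IsMarkovKernel (κ x)]
    (hinv : ∀ x : G, μ.bind (fun η => κ x η) = μ)
    (C : ℝ) (hC : 1 ≤ C)
    (htal : ∀ g : Ω → ℝ, Measurable g → (∃ M : ℝ, ∀ η, |g η| ≤ M) →
      ENNReal.ofReal (∫ η, (g η - ∫ ζ, g ζ ∂μ) ^ 2 ∂μ) ≤
        ENNReal.ofReal C *
          ∑' x : G, (orliczNorm μ Phi (fun η => (∫ ξ, g ξ ∂(κ x η)) - g η)) ^ 2)
    (F : Ω → ℝ) (hF : Measurable F) {M : ℝ} (hM : ∀ η, |F η| ≤ M) (hF0 : ∀ η, 0 ≤ F η)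
    (hF1 : ∫ η, F η ^ 2 ∂μ = 1) :
    ENNReal.ofReal (∫ η, F η ^ 2 * Real.log (F η ^ 2) ∂μ) ≤
      ENNReal.ofReal (3090 * C) * ∑' x : G, En μ (κ x) F := by
  set S := ∑' x : G, En μ (κ x) F with hS
  -- the L2 part
  have hI1 := int_bdd μ hF hM
  have hI2 := int_sq μ hF hM
  have hA : ENNReal.ofReal (∫ η, (F η - 1) ^ 2 ∂μ) ≤ ENNReal.ofReal (2 * C) * S := by
    have h1 : ∫ η, (F η - 1) ^ 2 ∂μ ≤ 2 * ∫ η, (F η - ∫ ζ, F ζ ∂μ) ^ 2 ∂μ := by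
      rw [expand_sq μ hF hM, expand_sq μ hF hM, hF1]
      have : 0 ≤ ∫ ζ, F ζ ∂μ := integral_nonneg hF0
      have h2 := jensen_sq μ hF hM 0
      simp only [sub_zero, hF1] at h2
      nlinarith
    calc _ ≤ ENNReal.ofReal (2 * ∫ η, (F η - ∫ ζ, F ζ ∂μ) ^ 2 ∂μ) := ENNReal.ofReal_le_ofReal h1
      _ = ENNReal.ofReal 2 * ENNReal.ofReal (∫ η, (F η - ∫ ζ, F ζ ∂μ) ^ 2 ∂μ) :=
        ENNReal.ofReal_mul (by norm_num)
      _ ≤ ENNReal.ofReal 2 * (ENNReal.ofReal C * S) := by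
        gcongr
        refine (htal F hF ⟨M, hM⟩).trans ?_
        gcongr
        exact ENNReal.tsum_le_tsum fun x => orlicz_le_En μ (κ x) hF hM
      _ = _ := by rw [← mul_assoc, ← ENNReal.ofReal_mul (by norm_num)]
  -- truncations
  have hgm : ∀ k, Measurable (fun η => tr (k + 1) (F η)) := fun k => (tr_meas _).comp hF
  have hgb : ∀ k η, |tr (k + 1) (F η)| ≤ 2 ^ (k + 1) := fun k η => by
    rw [abs_of_nonneg (tr_nonneg _ _)]; exact tr_le _ _
  have hB : ∀ k : ℕ, ENNReal.ofReal (((k + 1 : ℕ) : ℝ) * ∫ η, tr (k + 1) (F η) ^ 2 ∂μ) ≤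
      ENNReal.ofReal (32 * C) * ∑' x : G, En μ (κ x) (fun η => tr (k + 1) (F η)) := by
    intro k
    set g : Ω → ℝ := fun η => tr (k + 1) (F η) with hg
    set A : Set Ω := {η | 2 ^ (k + 1) ≤ F η} with hAdef
    have hAm : MeasurableSet A := measurableSet_le measurable_const hF
    have hgA : ∀ η, η ∉ A → g η = 0 := by
      intro η hη
      simp only [hAdef, Set.mem_ofPred_eq, not_le] at hη
      simp only [hg, tr]
      rw [max_eq_right (by linarith), min_eq_left (by positivity)]
    have hmA : μ.real A ≤ (4 ^ (k + 1))⁻¹ := by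
      have h1 : (4 : ℝ) ^ (k + 1) * μ.real A ≤ ∫ η, F η ^ 2 ∂μ := by
        have h2 := mul_meas_ge_le_integral_of_nonneg
          (Filter.Eventually.of_forall fun η => sq_nonneg (F η)) hI2 (4 ^ (k + 1))
        refine le_trans ?_ h2
        gcongr
        · exact measure_ne_top _ _
        · intro η hη
          simp only [hAdef, Set.mem_ofPred_eq] at hη ⊢
          calc (4 : ℝ) ^ (k + 1) = (2 ^ (k + 1)) ^ 2 := by rw [← pow_mul, mul_comm, pow_mul]; norm_num
            _ ≤ _ := by gcongr
      rw [hF1] at h1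
      rw [← one_div, le_div_iff₀ (by positivity)]
      linarith
    have hmA' : μ A ≤ ENNReal.ofReal ((4 ^ (k + 1))⁻¹) := by
      rw [← ENNReal.ofReal_toReal (measure_ne_top μ A)]
      exact ENNReal.ofReal_le_ofReal hmA
    have h4 : μ.real A ≤ 1 / 4 := by
      refine hmA.trans ?_
      rw [inv_le_comm₀ (by positivity) (by norm_num)]
      calc (1 / 4 : ℝ)⁻¹ = 4 ^ 1 := by norm_num
        _ ≤ 4 ^ (k + 1) := by gcongr <;> first | norm_num | omega
    have hvar : ∫ η, g η ^ 2 ∂μ ≤ 2 * ∫ η, (g η - ∫ ζ, g ζ ∂μ) ^ 2 ∂μ := by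
      rw [expand_sq μ (hgm k) (hgb k)]
      have h5 := cs_supp μ (hgm k) (hgb k) hAm hgA (4 * ∫ ζ, g ζ ∂μ)
      have h6 : (4 * ∫ ζ, g ζ ∂μ) ^ 2 * μ.real A ≤ (4 * ∫ ζ, g ζ ∂μ) ^ 2 * (1 / 4) := by gcongr
      have h7 : 0 ≤ ∫ η, g η ^ 2 ∂μ := integral_nonneg fun _ => sq_nonneg _
      change 2 * (4 * ∫ ζ, g ζ ∂μ) * (∫ ζ, g ζ ∂μ) ≤ (∫ ζ, g ζ ^ 2 ∂μ) + _ at h5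
      change _ ≤ 2 * ((∫ ζ, g ζ ^ 2 ∂μ) - 2 * (∫ ζ, g ζ ∂μ) * (∫ ζ, g ζ ∂μ) + (∫ ζ, g ζ ∂μ) ^ 2)
      nlinarith
    have hkp : (0 : ℝ) < ((k + 1 : ℕ) : ℝ) := by positivity
    calc _ ≤ ENNReal.ofReal (((k + 1 : ℕ) : ℝ) * (2 * ∫ η, (g η - ∫ ζ, g ζ ∂μ) ^ 2 ∂μ)) := by
          apply ENNReal.ofReal_le_ofReal; gcongr
      _ = ENNReal.ofReal (((k + 1 : ℕ) : ℝ) * 2) *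
          ENNReal.ofReal (∫ η, (g η - ∫ ζ, g ζ ∂μ) ^ 2 ∂μ) := by
          rw [← mul_assoc, ENNReal.ofReal_mul (by positivity)]
      _ ≤ ENNReal.ofReal (((k + 1 : ℕ) : ℝ) * 2) * (ENNReal.ofReal C *
          ∑' x, ENNReal.ofReal (16 / ((k + 1 : ℕ) : ℝ)) * En μ (κ x) g) := by
          gcongr
          refine (htal g (hgm k) ⟨_, hgb k⟩).trans ?_
          gcongr with x
          exact
            orlicz_le_En_k μ (κ x) (hinv x) (hgm k) (hgb k) hAm hgA (k + 1) (by omega) hmA'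
      _ = _ := by
          rw [ENNReal.tsum_mul_left, ← mul_assoc, ← mul_assoc,
            ← ENNReal.ofReal_mul (by positivity), ← ENNReal.ofReal_mul (by positivity)]
          congr 2
          field_simp
          norm_num
  obtain ⟨N, hN⟩ := pow_unbounded_of_one_lt M (by norm_num : (1 : ℝ) < 2)
  have hI3 : Integrable (fun η => (F η - 1) ^ 2) μ := by
    refine int_sq _ (hF.sub_const _) (M := M + 1) fun ξ => ?_
    refine (abs_sub _ _).trans ?_
    simpa using hM ξ
  have hI4 : ∀ k : ℕ, Integrable (fun η => ((k + 1 : ℕ) : ℝ) * tr (k + 1) (F η) ^ 2) μ :=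
    fun k => (int_sq μ (hgm k) (hgb k)).const_mul _
  have hI5 : Integrable (fun η => F η ^ 2 * Real.log (F η ^ 2)) μ := by
    have hc := Real.continuous_mul_log
    obtain ⟨B, hB⟩ := (isCompact_Icc (a := (0 : ℝ)) (b := M ^ 2)).exists_bound_of_continuousOn
      hc.continuousOn
    refine int_bdd μ (by fun_prop) (M := B) fun η => ?_
    refine hB (F η ^ 2) ⟨sq_nonneg _, ?_⟩
    exact pow_le_pow_left₀ (hF0 η) ((le_abs_self _).trans (hM η)) 2
  have hent : ∫ η, F η ^ 2 * Real.log (F η ^ 2) ∂μ ≤ 9 * (∫ η, (F η - 1) ^ 2 ∂μ) +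
      96 * ∑ k ∈ Finset.range N, ((k + 1 : ℕ) : ℝ) * ∫ η, tr (k + 1) (F η) ^ 2 ∂μ := by
    have e1 : ∫ η, F η ^ 2 * Real.log (F η ^ 2) ∂μ =
        ∫ η, (F η ^ 2 * Real.log (F η ^ 2) - F η ^ 2 + 1) ∂μ := by
      have hI6 : Integrable (fun η => F η ^ 2 * Real.log (F η ^ 2) - F η ^ 2) μ := hI5.sub hI2
      rw [integral_add hI6 (integrable_const _), integral_sub hI5 hI2, hF1]
      simp
    have e2 : 9 * (∫ η, (F η - 1) ^ 2 ∂μ) +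
      96 * ∑ k ∈ Finset.range N, ((k + 1 : ℕ) : ℝ) * ∫ η, tr (k + 1) (F η) ^ 2 ∂μ =
      ∫ η, (9 * (F η - 1) ^ 2 +
        96 * ∑ k ∈ Finset.range N, ((k + 1 : ℕ) : ℝ) * tr (k + 1) (F η) ^ 2) ∂μ := by
      rw [integral_add (hI3.const_mul _)
        ((integrable_finsetSum _ fun k _ => hI4 k).const_mul _), integral_const_mul,
        integral_const_mul, integral_finsetSum _ fun k _ => hI4 k]
      simp_rw [integral_const_mul]
    rw [e1, e2]
    refine integral_mono ((hI5.sub hI2).add (integrable_const _)) ((hI3.const_mul _).add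
        ((integrable_finsetSum _ fun k _ => hI4 k).const_mul _)) fun η => ?_
    exact ptwise N (F η) (hF0 η) (((le_abs_self _).trans (hM η)).trans hN.le)
  have hsum : ENNReal.ofReal (∑ k ∈ Finset.range N,
      ((k + 1 : ℕ) : ℝ) * ∫ η, tr (k + 1) (F η) ^ 2 ∂μ) ≤ ENNReal.ofReal (32 * C) * S := by
    rw [ENNReal.ofReal_sum_of_nonneg fun k _ =>
      mul_nonneg (Nat.cast_nonneg _) (integral_nonneg fun _ => sq_nonneg _)]
    calc _ ≤ ∑ k ∈ Finset.range N, ENNReal.ofReal (32 * C) *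
          ∑' x : G, En μ (κ x) (fun η => tr (k + 1) (F η)) := Finset.sum_le_sum fun k _ => hB k
      _ = ENNReal.ofReal (32 * C) * ∑' x : G, ∑ k ∈ Finset.range N,
          En μ (κ x) (fun η => tr (k + 1) (F η)) := by
        rw [← Finset.mul_sum, Summable.tsum_finsetSum fun _ _ => ENNReal.summable]
      _ ≤ _ := by
        gcongr
        exact ENNReal.tsum_le_tsum fun x => En_sum μ (κ x) hF hM N
  have hn1 : 0 ≤ ∫ η, (F η - 1) ^ 2 ∂μ := integral_nonneg fun _ => sq_nonneg _
  have hn2 : 0 ≤ ∑ k ∈ Finset.range N, ((k + 1 : ℕ) : ℝ) * ∫ η, tr (k + 1) (F η) ^ 2 ∂μ :=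
    Finset.sum_nonneg fun k _ =>
      mul_nonneg (Nat.cast_nonneg _) (integral_nonneg fun _ => sq_nonneg _)
  calc _ ≤ _ := ENNReal.ofReal_le_ofReal hent
    _ = ENNReal.ofReal 9 * ENNReal.ofReal (∫ η, (F η - 1) ^ 2 ∂μ) + ENNReal.ofReal 96 *
        ENNReal.ofReal (∑ k ∈ Finset.range N,
          ((k + 1 : ℕ) : ℝ) * ∫ η, tr (k + 1) (F η) ^ 2 ∂μ) := by
      rw [ENNReal.ofReal_add (by positivity) (mul_nonneg (by norm_num) hn2),
        ENNReal.ofReal_mul (by norm_num), ENNReal.ofReal_mul (by norm_num)]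
    _ ≤ ENNReal.ofReal 9 * (ENNReal.ofReal (2 * C) * S) +
        ENNReal.ofReal 96 * (ENNReal.ofReal (32 * C) * S) := by gcongr
    _ = _ := by
      rw [← mul_assoc, ← mul_assoc, ← add_mul, ← ENNReal.ofReal_mul (by norm_num),
        ← ENNReal.ofReal_mul (by norm_num), ← ENNReal.ofReal_add (by positivity) (by positivity)]
      congr 2
      ring

/-- If the Talagrand-type inequality `Var_μ(g) ≤ C ∑_x ‖D_x g‖_Φ²` holds for all bounded
measurable `g` (with `C ≥ 1`), then the log-Sobolev-type inequality
`Ent_μ(f²) ≤ (13/4)·700⁴ · C · ℰ(f,f)` holds for all bounded measurable `f`, where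
`D_x g(η) = ∫ g dκ_x(η) − g(η)` and
`ℰ(f,f) = (1/2) ∑_x ∫ (∫ (f(ξ)−f(η))² dκ_x(η)(ξ)) dμ(η)`. -/
theorem stmt7 {Ω : Type*} [MeasurableSpace Ω] (μ : Measure Ω) [IsProbabilityMeasure μ]
    {G : Type*} [Countable G]
    (κ : G → Kernel Ω Ω) [∀ x, IsMarkovKernel (κ x)]
    (hinv : ∀ x : G, μ.bind (fun η => κ x η) = μ)
    (C : ℝ) (hC : 1 ≤ C)
    (htal : ∀ g : Ω → ℝ, Measurable g → (∃ M : ℝ, ∀ η, |g η| ≤ M) →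
      ENNReal.ofReal (∫ η, (g η - ∫ ζ, g ζ ∂μ) ^ 2 ∂μ) ≤
        ENNReal.ofReal C *
          ∑' x : G, (orliczNorm μ Phi (fun η => (∫ ξ, g ξ ∂(κ x η)) - g η)) ^ 2)
    (f : Ω → ℝ) (hf : Measurable f) (hfb : ∃ M : ℝ, ∀ η, |f η| ≤ M) :
    ENNReal.ofReal (∫ η, (f η) ^ 2 * Real.log ((f η) ^ 2 / ∫ ζ, (f ζ) ^ 2 ∂μ) ∂μ) ≤
      ENNReal.ofReal ((13 / 4) * 700 ^ 4 * C) *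
        ((1 / 2 : ℝ≥0∞) *
          ∑' x : G, ∫⁻ η, ENNReal.ofReal (∫ ξ, (f ξ - f η) ^ 2 ∂(κ x η)) ∂μ) := by
  obtain ⟨M, hM⟩ := hfb
  have hs0 : 0 ≤ ∫ ζ, (f ζ) ^ 2 ∂μ := integral_nonneg fun _ => sq_nonneg _
  rcases hs0.eq_or_lt with h0 | hpos
  · rw [← h0]; simp
  set s := ∫ ζ, (f ζ) ^ 2 ∂μ with hs
  have hr : 0 < √s := Real.sqrt_pos.2 hpos
  have hr2 : √s ^ 2 = s := Real.sq_sqrt hpos.le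
  set F : Ω → ℝ := fun η => |f η| / √s with hFdef
  have hFsq : ∀ η, F η ^ 2 = f η ^ 2 / s := fun η => by
    simp only [hFdef]; rw [div_pow, sq_abs, hr2]
  have hF : Measurable F := by
    have : Measurable (fun η => |f η|) := hf.norm
    exact this.div_const _
  have hcore := core μ κ hinv C hC htal F hF (M := M / √s)
    (fun η => by
      simp only [hFdef]
      rw [abs_of_nonneg (by positivity)]
      have := hM η
      gcongr)
    (fun η => by positivity)
    (by simp_rw [hFsq]; rw [integral_div, ← hs, div_self hpos.ne'])
  have hE : ∀ x, ENNReal.ofReal s * En μ (κ x) F ≤ En μ (κ x) f := by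
    intro x
    unfold En
    rw [← lintegral_const_mul' _ _ ENNReal.ofReal_ne_top]
    apply lintegral_mono
    intro η
    simp only
    rw [← ENNReal.ofReal_mul hs0, ← integral_const_mul]
    apply ENNReal.ofReal_le_ofReal
    have hb : ∀ ξ, s * (F ξ - F η) ^ 2 = (|f ξ| - |f η|) ^ 2 := fun ξ => by
      simp only [hFdef]
      rw [← sub_div, div_pow, hr2]; field_simp
    simp_rw [hb]
    have hle : ∀ ξ, (|f ξ| - |f η|) ^ 2 ≤ (f ξ - f η) ^ 2 := fun ξ =>
      sq_le_sq.2 (abs_abs_sub_abs_le_abs_sub _ _)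
    refine integral_mono_of_nonneg (Filter.Eventually.of_forall fun _ => sq_nonneg _) ?_
      (Filter.Eventually.of_forall hle)
    refine int_sq _ (hf.sub_const _) (M := M + M) fun ξ => ?_
    exact (abs_sub _ _).trans (add_le_add (hM _) (hM _))
  have hent : ∫ η, (f η) ^ 2 * Real.log ((f η) ^ 2 / s) ∂μ =
      s * ∫ η, F η ^ 2 * Real.log (F η ^ 2) ∂μ := by
    rw [← integral_const_mul]
    congr 1
    ext η
    rw [hFsq]
    field_simp
  rw [hent, ENNReal.ofReal_mul hs0]
  change _ ≤ _ * (_ * ∑' x : G, En μ (κ x) f)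
  calc _ ≤ ENNReal.ofReal s * (ENNReal.ofReal (3090 * C) * ∑' x : G, En μ (κ x) F) := by gcongr
    _ = ENNReal.ofReal (3090 * C) * ∑' x : G, ENNReal.ofReal s * En μ (κ x) F := by
      rw [ENNReal.tsum_mul_left]; ring
    _ ≤ ENNReal.ofReal (3090 * C) * ∑' x : G, En μ (κ x) f := by
      gcongr with x
      exact hE x
    _ ≤ _ := by
      rw [← mul_assoc]
      gcongr
      have : (1 / 2 : ℝ≥0∞) = ENNReal.ofReal (1 / 2) := by
        rw [ENNReal.ofReal_div_of_pos (by norm_num)]; simp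
      rw [this, ← ENNReal.ofReal_mul (by positivity)]
      apply ENNReal.ofReal_le_ofReal
      nlinarith
end

section
/- Let n_L, n_R ≥ 1 be natural numbers and t ≥ 0 a real number. Then (2(n_L+n_R)−3)!! · t · ∫_{0}^{t} s^{2n_L−2} (t−s)^{2n_R−2} ds ≤ (2n_L−3)!! · (2n_R−3)!! · t^{2(n_L+n_R)−2}, where k!! denotes the double factorial (with the convention (−1)!! = 1, i.e. natural-number truncated subtraction in the arguments). -/
open MeasureTheory Real Nat

lemma aux_int (t : ℝ) (q : ℕ) : ∀ p : ℕ,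
    ((p + q + 1)! : ℝ) * ∫ s in (0:ℝ)..t, s ^ p * (t - s) ^ q
      = (p ! : ℝ) * (q ! : ℝ) * t ^ (p + q + 1) := by
  induction q with
  | zero =>
    intro p
    have hp : (p : ℝ) + 1 ≠ 0 := by positivity
    simp [Nat.factorial_succ]
    field_simp
  | succ q ih =>
    intro p
    have h1 : ∫ s in (0:ℝ)..t, (((p:ℝ) + 1) * (s ^ p * (t - s) ^ (q + 1))
        - ((q:ℝ) + 1) * (s ^ (p + 1) * (t - s) ^ q)) = 0 := by
      rw [intervalIntegral.integral_eq_sub_of_hasDerivAt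
        (f := fun s => s ^ (p + 1) * (t - s) ^ (q + 1))]
      · simp
      · intro x _
        have := (hasDerivAt_pow (p + 1) x).fun_mul
          (((hasDerivAt_id' x).const_sub t).fun_pow (q + 1))
        refine this.congr_deriv ?_
        simp
        ring
      · apply Continuous.intervalIntegrable
        fun_prop
    rw [intervalIntegral.integral_sub (by apply Continuous.intervalIntegrable; fun_prop)
      (by apply Continuous.intervalIntegrable; fun_prop),
      intervalIntegral.integral_const_mul, intervalIntegral.integral_const_mul] at h1
    have h2 := ih (p + 1)
    have e : p + 1 + q + 1 = p + (q + 1) + 1 := by ring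
    rw [e] at h2
    have hp : (p : ℝ) + 1 ≠ 0 := by positivity
    apply mul_left_cancel₀ hp
    rw [Nat.factorial_succ p] at h2
    rw [Nat.factorial_succ q]
    push_cast at h2 ⊢
    linear_combination ((p + (q + 1) + 1)! : ℝ) * h1 + ((q:ℝ) + 1) * h2

lemma aux_fac (a : ℕ) : (2 * a)! = (2 * a)‼ * (2 * (a + 1) - 3)‼ := by
  cases a with
  | zero => simp
  | succ a =>
    have e : 2 * (a + 1 + 1) - 3 = 2 * a + 1 := by omega
    rw [e, show 2 * (a + 1) = 2 * a + 1 + 1 by ring, Nat.factorial_eq_mul_doubleFactorial]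

lemma aux_le (a b : ℕ) : (2 * a)‼ * (2 * b)‼ ≤ (2 * (a + b))‼ := by
  rw [Nat.doubleFactorial_two_mul, Nat.doubleFactorial_two_mul, Nat.doubleFactorial_two_mul,
    pow_add]
  have := Nat.le_of_dvd (Nat.factorial_pos _) (Nat.factorial_mul_factorial_dvd_factorial_add a b)
  calc _ = 2 ^ a * 2 ^ b * (a ! * b !) := by ring
    _ ≤ _ := Nat.mul_le_mul_left _ this

/-- For `n_L, n_R ≥ 1` and `t ≥ 0`:
`(2(n_L+n_R)−3)‼ · t · ∫₀ᵗ s^(2n_L−2) (t−s)^(2n_R−2) ds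
  ≤ (2n_L−3)‼ · (2n_R−3)‼ · t^(2(n_L+n_R)−2)`. -/
theorem stmt10 (nL nR : ℕ) (hL : 1 ≤ nL) (hR : 1 ≤ nR) (t : ℝ) (ht : 0 ≤ t) :
    ((2 * (nL + nR) - 3)‼ : ℝ) * t *
        ∫ s in (0:ℝ)..t, s ^ (2 * (nL : ℝ) - 2) * (t - s) ^ (2 * (nR : ℝ) - 2) ≤
      ((2 * nL - 3)‼ : ℝ) * ((2 * nR - 3)‼ : ℝ) * t ^ (2 * ((nL : ℝ) + nR) - 2) := by
  obtain ⟨a, rfl⟩ : ∃ a, nL = a + 1 := ⟨nL - 1, by omega⟩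
  obtain ⟨b, rfl⟩ : ∃ b, nR = b + 1 := ⟨nR - 1, by omega⟩
  have e1 : 2 * ((a + 1 : ℕ) : ℝ) - 2 = ((2 * a : ℕ) : ℝ) := by push_cast; ring
  have e2 : 2 * ((b + 1 : ℕ) : ℝ) - 2 = ((2 * b : ℕ) : ℝ) := by push_cast; ring
  have e3 : 2 * (((a + 1 : ℕ) : ℝ) + ((b + 1 : ℕ) : ℝ)) - 2 = ((2 * a + 2 * b + 2 : ℕ) : ℝ) := by
    push_cast; ring
  have e4 : 2 * (a + 1 + (b + 1)) - 3 = 2 * (a + b) + 1 := by omega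
  rw [e1, e2, e3, e4]
  simp only [Real.rpow_natCast]
  have hI := aux_int t (2 * b) (2 * a)
  have hD : (2 * a + 2 * b + 1)! = (2 * (a + b) + 1)‼ * (2 * (a + b))‼ := by
    rw [← Nat.factorial_eq_mul_doubleFactorial]; congr 1; ring
  rw [hD, aux_fac a, aux_fac b] at hI
  have hle : ((2 * a)‼ : ℝ) * ((2 * b)‼ : ℝ) ≤ ((2 * (a + b))‼ : ℝ) := by
    exact_mod_cast aux_le a b
  have hE : (0:ℝ) < ((2 * (a + b))‼ : ℝ) := by exact_mod_cast Nat.doubleFactorial_pos _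
  push_cast at hI
  refine le_of_mul_le_mul_left ?_ hE
  have hnn : 0 ≤ ((2 * (a + 1) - 3)‼ : ℝ) * ((2 * (b + 1) - 3)‼ : ℝ) * t ^ (2 * a + 2 * b + 2) := by
    positivity
  refine le_trans (le_of_eq ?_) (mul_le_mul_of_nonneg_right hle hnn)
  linear_combination t * hI
end
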